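/- For all nonnegative integers n, r, s, the number of partitions π of n with exactly r odd parts whose conjugate π′ has exactly s odd parts equals the number of triples (ν, σ, τ) where ν is a partition into parts divisible by 4, σ is a partition into parts congruent to 2 modulo 4, τ is a partition into odd parts, the sizes of ν, σ, τ sum to n, τ has exactly s parts, and twice the number of parts of σ plus the number of distinct integers occurring in τ with odd multiplicity equals r. -/

import Mathlib

/-- A partition, modeled as a nonincreasing function `ℕ → ℕ` with only finitely many
nonzero terms. -/
def IsPartitionFun (f : ℕ → ℕ) : Prop :=
  (∀ i j, i ≤ j → f j ≤ f i) ∧ ∃ N, ∀ i, N ≤ i → f i = 0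

/-- The sum of the parts of a partition. -/
noncomputable def partSum (f : ℕ → ℕ) : ℕ := ∑' i, f i

/-- `𝒪(f)`: the number of odd parts of the partition `f`. -/
noncomputable def oddParts (f : ℕ → ℕ) : ℕ := {i | Odd (f i)}.ncard

/-- `l(f)`: the number of parts of the partition `f`. -/
noncomputable def numParts (f : ℕ → ℕ) : ℕ := {i | 0 < f i}.ncard

/-- The conjugate partition: its zero-based `i`-th term is the number of parts
that are at least `i+1`. -/
noncomputable def conjFun (f : ℕ → ℕ) : ℕ → ℕ := fun i => {j | i + 1 ≤ f j}.ncard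

/-- The multiplicity of `k` as a part of `f`. -/
noncomputable def multiplicity' (f : ℕ → ℕ) (k : ℕ) : ℕ := {i | f i = k}.ncard

/-!
Both sides are counted by pairs `(p, q)`, where `p` is a partition with distinct odd parts and `q`
is a partition into odd parts.

Such a pair gives a partition `π`: split each part `k` of `p` into `⌈k / 2⌉` and `⌊k / 2⌋`, and add
twice the conjugate of `q`. Since `𝒪` of the conjugate of `π` is the alternating sum
`π₀ - π₁ + π₂ - ⋯`, it is additive in `π` and equals `𝒪(p) + 2 l(q)` here. As for `π` itself, both
halves of a part `k` are odd if `k ≡ 2 (mod 4)`, exactly one is if `k` is odd, and none is if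
`4 ∣ k`. Conversely, `q` is recovered from the differences `π₂ᵢ - π₂ᵢ₊₁`, to which `p` contributes
at most `1` and `q` an even number.

The pair also gives a triple `(ν, σ, τ)`: sort the parts of `p` by residue modulo `4`, and add every
part of `q` twice to `τ`. The integers of odd multiplicity in `τ` are then the odd parts of `p`.
-/

open Finset (range)
open scoped Finset

/-! ### Conjugation -/

namespace IsPartitionFun

variable {f g : ℕ → ℕ}

theorem antitone (hf : IsPartitionFun f) : Antitone f := fun i j => hf.1 i j

theorem of_succ_le (hle : ∀ i, f (i + 1) ≤ f i) (hzero : ∃ N, ∀ i, N ≤ i → f i = 0) :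
    IsPartitionFun f :=
  ⟨fun _ _ hij => antitone_nat_of_succ_le hle hij, hzero⟩

theorem lt_conjFun_iff (hf : IsPartitionFun f) {i j : ℕ} : j < conjFun f i ↔ i < f j := by
  obtain ⟨N, hN⟩ := hf.2
  have hex : ∃ n, f n ≤ i := ⟨N, by simp [hN N le_rfl]⟩
  have lt_find_iff (k : ℕ) : k < Nat.find hex ↔ i < f k := by
    simp only [Nat.lt_find_iff, not_le]
    exact ⟨fun h => h k le_rfl, fun h m hmk => h.trans_le (hf.antitone hmk)⟩
  have hset : {k | i + 1 ≤ f k} = (range (Nat.find hex) : Set ℕ) := by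
    ext k
    simp [lt_find_iff]
  rw [conjFun, hset, Set.ncard_coe_finset, Finset.card_range, lt_find_iff]

theorem lt_numParts_iff (hf : IsPartitionFun f) {i : ℕ} : i < numParts f ↔ 0 < f i :=
  hf.lt_conjFun_iff

theorem conj (hf : IsPartitionFun f) : IsPartitionFun (conjFun f) := by
  refine ⟨fun i j hij => ?_, f 0, fun i hi => ?_⟩
  · refine le_of_forall_lt fun k hk => ?_
    rw [hf.lt_conjFun_iff] at hk ⊢
    exact hij.trans_lt hk
  · by_contra hne
    exact hi.not_gt (hf.lt_conjFun_iff.1 (Nat.pos_of_ne_zero hne))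

theorem conjFun_conjFun (hf : IsPartitionFun f) : conjFun (conjFun f) = f :=
  funext fun i => eq_of_forall_lt_iff fun j => by
    rw [hf.conj.lt_conjFun_iff, hf.lt_conjFun_iff]

theorem add (hf : IsPartitionFun f) (hg : IsPartitionFun g) : IsPartitionFun (f + g) := by
  obtain ⟨N, hN⟩ := hf.2
  obtain ⟨M, hM⟩ := hg.2
  refine ⟨hf.antitone.add hg.antitone, max N M, fun i hi => ?_⟩
  simp [hN i (le_of_max_le_left hi), hM i (le_of_max_le_right hi)]

theorem hasFiniteSupport_comp (hf : IsPartitionFun f) {M : Type*} [Zero M] {w : ℕ → M}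
    (hw : w 0 = 0) : Function.HasFiniteSupport fun i => w (f i) := by
  refine (range (numParts f)).finite_toSet.subset fun i hi => ?_
  rw [Finset.mem_coe, Finset.mem_range, hf.lt_numParts_iff]
  exact Nat.pos_of_ne_zero fun h0 => hi (by simp [h0, hw])

theorem hasFiniteSupport (hf : IsPartitionFun f) : Function.HasFiniteSupport f :=
  hf.hasFiniteSupport_comp (w := id) rfl

theorem summable_comp (hf : IsPartitionFun f) {w : ℕ → ℕ} (hw : w 0 = 0) :
    Summable fun i => w (f i) :=
  summable_of_hasFiniteSupport (hf.hasFiniteSupport_comp hw)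

theorem summable (hf : IsPartitionFun f) : Summable f :=
  summable_of_hasFiniteSupport hf.hasFiniteSupport

theorem tsum_comp_eq_sum_range (hf : IsPartitionFun f) {w : ℕ → ℕ} (hw : w 0 = 0) :
    ∑' i, w (f i) = ∑ i ∈ range (numParts f), w (f i) := by
  refine tsum_eq_sum fun i hi => ?_
  rw [Finset.mem_range, hf.lt_numParts_iff, not_lt, Nat.le_zero] at hi
  rw [hi, hw]

theorem ncard_setOf_eq_card_filter (hf : IsPartitionFun f) {P : ℕ → Prop} [DecidablePred P]
    (hP : ¬ P 0) : {i | P (f i)}.ncard = #{i ∈ range (numParts f) | P (f i)} := by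
  rw [← Set.ncard_coe_finset]
  congr 1
  ext i
  suffices P (f i) → 0 < f i by simpa [hf.lt_numParts_iff]
  exact fun hPi => Nat.pos_of_ne_zero fun h0 => hP (h0 ▸ hPi)

theorem ncard_setOf_eq_tsum (hf : IsPartitionFun f) {P : ℕ → Prop} [DecidablePred P]
    (hP : ¬ P 0) : {i | P (f i)}.ncard = ∑' i, if P (f i) then 1 else 0 := by
  rw [hf.ncard_setOf_eq_card_filter hP, Finset.card_filter,
    hf.tsum_comp_eq_sum_range (w := fun k => if P k then 1 else 0) (if_neg hP)]

theorem eq_of_forall_eq_add_succ {d : ℕ → ℕ} (hf : IsPartitionFun f) (hg : IsPartitionFun g)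
    (hfd : ∀ i, f i = d i + f (i + 1)) (hgd : ∀ i, g i = d i + g (i + 1)) : f = g := by
  obtain ⟨N, hN⟩ := hf.2
  obtain ⟨M, hM⟩ := hg.2
  have agree (k i : ℕ) (hk : N + M ≤ i + k) : f i = g i := by
    induction k generalizing i with
    | zero => rw [hN i (by omega), hM i (by omega)]
    | succ k ih => rw [hfd, hgd, ih (i + 1) (by omega)]
  exact funext fun i => agree (N + M) i (by omega)

theorem exists_forall_eq_add_succ {d : ℕ → ℕ} (hd : ∃ N, ∀ i, N ≤ i → d i = 0) :
    ∃ f, IsPartitionFun f ∧ ∀ i, f i = d i + f (i + 1) := by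
  obtain ⟨N, hN⟩ := hd
  have tail_succ (i : ℕ) : ∑ j ∈ .Ico i N, d j = d i + ∑ j ∈ .Ico (i + 1) N, d j := by
    rcases lt_or_ge i N with hi | hi
    · exact Finset.sum_eq_sum_Ico_succ_bot hi d
    · simp [hN i hi, Finset.Ico_eq_empty_of_le hi, Finset.Ico_eq_empty_of_le (hi.trans i.le_succ)]
  refine ⟨fun i => ∑ j ∈ .Ico i N, d j, of_succ_le (fun i => ?_) ⟨N, fun i hi => ?_⟩, tail_succ⟩
  · exact (tail_succ i).ge.trans' (Nat.le_add_left _ _)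
  · simp [hi]

theorem partSum_add (hf : IsPartitionFun f) (hg : IsPartitionFun g) :
    partSum (f + g) = partSum f + partSum g :=
  hf.summable.tsum_add hg.summable

theorem conjFun_eq_card_filter (hf : IsPartitionFun f) (k : ℕ) :
    conjFun f k = #{i ∈ range (numParts f) | k < f i} :=
  hf.ncard_setOf_eq_card_filter (P := (k < ·)) (Nat.not_lt_zero k)

theorem partSum_eq_sum_range (hf : IsPartitionFun f) :
    partSum f = ∑ i ∈ range (numParts f), f i :=
  hf.tsum_comp_eq_sum_range (w := id) rfl

theorem partSum_conjFun (hf : IsPartitionFun f) : partSum (conjFun f) = partSum f :=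
  calc partSum (conjFun f)
      = ∑ k ∈ range (numParts (conjFun f)), #{i ∈ range (numParts f) | k < f i} := by
        simp only [hf.conj.partSum_eq_sum_range, hf.conjFun_eq_card_filter]
    _ = ∑ i ∈ range (numParts f), #{k ∈ range (numParts (conjFun f)) | k < f i} :=
        Finset.sum_card_bipartiteAbove_eq_sum_card_bipartiteBelow fun k i => k < f i
    _ = partSum f := by
        simp only [← hf.lt_conjFun_iff, ← hf.conj.conjFun_eq_card_filter, hf.conjFun_conjFun,
          hf.partSum_eq_sum_range]

end IsPartitionFun

/-! ### Odd parts of the conjugate -/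

theorem tsum_eq_tsum_even_add_odd {M : Type*} [AddCommMonoid M] [TopologicalSpace M] [T2Space M]
    [ContinuousAdd M] {g : ℕ → M} (hg : Function.HasFiniteSupport g) :
    ∑' i, g i = ∑' i, (g (2 * i) + g (2 * i + 1)) := by
  have heven : Summable fun i => g (2 * i) :=
    summable_of_hasFiniteSupport <| hg.preimage (mul_right_injective₀ two_ne_zero).injOn
  have hodd : Summable fun i => g (2 * i + 1) :=
    summable_of_hasFiniteSupport <| hg.preimage
      ((add_left_injective 1).comp (mul_right_injective₀ two_ne_zero)).injOn
  rw [heven.tsum_add hodd, tsum_even_add_odd heven hodd]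

theorem conjFun_odd_eq_conjFun_succ {q : ℕ → ℕ} (hodd : ∀ i, 0 < q i → Odd (q i)) (i : ℕ) :
    conjFun q (2 * i + 1) = conjFun q (2 * i + 2) := by
  refine congrArg Set.ncard (Set.ext fun j => ?_)
  have := hodd j
  simp only [Set.mem_ofPred_eq, Nat.odd_iff] at this ⊢
  omega

namespace IsPartitionFun

variable {f g : ℕ → ℕ}

theorem odd_conjFun_iff (hf : IsPartitionFun f) {k : ℕ} :
    Odd (conjFun f k) ↔ ∃ i, f (2 * i + 1) ≤ k ∧ k < f (2 * i) := by
  refine exists_congr fun i => ?_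
  rw [← hf.lt_conjFun_iff, ← not_lt, ← hf.lt_conjFun_iff]
  omega

theorem oddParts_conjFun (hf : IsPartitionFun f) :
    oddParts (conjFun f) = ∑' i, (f (2 * i) - f (2 * i + 1)) := by
  have hzero (i : ℕ) (hi : i ∉ range (numParts f)) : f (2 * i) = 0 := by
    rw [Finset.mem_range, hf.lt_numParts_iff, not_lt, Nat.le_zero] at hi
    exact Nat.le_zero.1 ((hf.antitone (by omega)).trans hi.le)
  have hset : {k | Odd (conjFun f k)} =
      ((range (numParts f)).biUnion fun i => .Ico (f (2 * i + 1)) (f (2 * i)) : Finset ℕ) := by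
    ext k
    simp only [Set.mem_ofPred_eq, hf.odd_conjFun_iff, Finset.coe_biUnion, Set.mem_iUnion,
      Finset.coe_Ico, Set.mem_Ico, Finset.mem_coe, exists_prop]
    refine exists_congr fun i => (and_iff_right_of_imp fun hk => ?_).symm
    by_contra hi
    exact absurd hk.2 (by simp [hzero i hi])
  have hdisj : ∀ i j, i < j →
      Disjoint (Finset.Ico (f (2 * i + 1)) (f (2 * i))) (.Ico (f (2 * j + 1)) (f (2 * j))) :=
    fun i j hij => Finset.disjoint_left.2 fun k hki hkj => by
      have hle : f (2 * j) ≤ f (2 * i + 1) := hf.antitone (by omega)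
      rw [Finset.mem_Ico] at hki hkj
      omega
  rw [oddParts, hset, Set.ncard_coe_finset, Finset.card_biUnion]
  · simp only [Nat.card_Ico]
    exact (tsum_eq_sum fun i hi => by simp [hzero i hi]).symm
  · intro i _ j _ hij
    rcases hij.lt_or_gt with h | h
    · exact hdisj i j h
    · exact (hdisj j i h).symm

theorem summable_even_sub_odd (hf : IsPartitionFun f) :
    Summable fun i => f (2 * i) - f (2 * i + 1) := by
  obtain ⟨N, hN⟩ := hf.2
  refine summable_of_ne_finset_zero (s := range N) fun i hi => ?_
  rw [hN (2 * i) (by rw [Finset.mem_range] at hi; omega), Nat.zero_sub]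

theorem oddParts_conjFun_add (hf : IsPartitionFun f) (hg : IsPartitionFun g) :
    oddParts (conjFun (f + g)) = oddParts (conjFun f) + oddParts (conjFun g) := by
  rw [(hf.add hg).oddParts_conjFun, hf.oddParts_conjFun, hg.oddParts_conjFun,
    ← hf.summable_even_sub_odd.tsum_add hg.summable_even_sub_odd]
  refine tsum_congr fun i => ?_
  exact (tsub_add_tsub_comm (hf.antitone (2 * i).le_succ) (hg.antitone (2 * i).le_succ)).symm

theorem odd_conjFun_of_forall_eq (hf : IsPartitionFun f)
    (heq : ∀ i, f (2 * i + 1) = f (2 * i + 2)) (k : ℕ) (hk : 0 < conjFun f k) :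
    Odd (conjFun f k) := by
  by_contra heven
  obtain ⟨m, hm⟩ : ∃ m, conjFun f k = 2 * m + 2 :=
    ⟨conjFun f k / 2 - 1, by rw [Nat.not_odd_iff] at heven; omega⟩
  have hlt : k < f (2 * m + 1) := hf.lt_conjFun_iff.1 (by omega)
  rw [heq, ← hf.lt_conjFun_iff] at hlt
  omega

end IsPartitionFun

/-! ### Partitions as pairs -/

/-- The partition obtained from `p` by replacing each part `k` by the two parts `⌈k / 2⌉` and
`⌊k / 2⌋`, placed at positions `2 * i` and `2 * i + 1` when `k = p i`. It is nonincreasing when the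
odd parts of `p` are distinct. -/
def splitHalves (p : ℕ → ℕ) (j : ℕ) : ℕ := (p (j / 2) + (j + 1) % 2) / 2

theorem splitHalves_even (p : ℕ → ℕ) (i : ℕ) : splitHalves p (2 * i) = (p i + 1) / 2 := by
  simp [splitHalves, Nat.add_mod]

theorem splitHalves_odd (p : ℕ → ℕ) (i : ℕ) : splitHalves p (2 * i + 1) = p i / 2 := by
  rw [splitHalves, show (2 * i + 1) / 2 = i by omega, show (2 * i + 1 + 1) % 2 = 0 by omega,
    add_zero]

/-- The odd parts of the partition `p` are pairwise distinct. -/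
def HasDistinctOddParts (p : ℕ → ℕ) : Prop := Set.InjOn p {i | Odd (p i)}

theorem IsPartitionFun.hasDistinctOddParts_iff {p : ℕ → ℕ} (hp : IsPartitionFun p) :
    HasDistinctOddParts p ↔ ∀ i, Odd (p i) → p (i + 1) < p i := by
  refine ⟨fun h i hi => ?_, fun h => ?_⟩
  · refine (hp.antitone i.le_succ).lt_of_ne fun heq => ?_
    exact i.succ_ne_self (h (by simpa [heq] using hi) hi heq)
  · have hlt {i j : ℕ} (hi : Odd (p i)) (hij : i < j) : p j < p i :=
      (hp.antitone hij).trans_lt (h i hi)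
    intro i hi j hj heq
    rcases lt_trichotomy i j with hij | hij | hij
    · exact absurd heq (hlt hi hij).ne'
    · exact hij
    · exact absurd heq (hlt hj hij).ne

namespace IsPartitionFun

variable {g p : ℕ → ℕ}

theorem split (hp : IsPartitionFun p) (hdist : HasDistinctOddParts p) :
    IsPartitionFun (splitHalves p) := by
  obtain ⟨N, hN⟩ := hp.2
  refine of_succ_le (fun j => ?_) ⟨2 * N, fun j hj => ?_⟩
  · obtain ⟨i, rfl | rfl⟩ := j.even_or_odd'
    · rw [splitHalves_even, splitHalves_odd]
      omega
    · rw [show 2 * i + 1 + 1 = 2 * (i + 1) by ring, splitHalves_even, splitHalves_odd]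
      have hle := hp.antitone (Nat.le_add_right i 1)
      have hlt := hp.hasDistinctOddParts_iff.1 hdist i
      rw [Nat.odd_iff] at hlt
      omega
  · rw [splitHalves, hN (j / 2) (by omega)]
    omega

theorem partSum_splitHalves (hp : IsPartitionFun p) (hdist : HasDistinctOddParts p) :
    partSum (splitHalves p) = partSum p := by
  rw [partSum, tsum_eq_tsum_even_add_odd (hp.split hdist).hasFiniteSupport]
  refine tsum_congr fun i => ?_
  rw [splitHalves_even, splitHalves_odd]
  omega

theorem oddParts_splitHalves (hp : IsPartitionFun p) (hdist : HasDistinctOddParts p) :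
    oddParts (splitHalves p) = oddParts p + 2 * {i | p i % 4 = 2}.ncard := by
  have halves_parity (k : ℕ) :
      ((if Odd ((k + 1) / 2) then 1 else 0) + if Odd (k / 2) then 1 else 0) =
        (if Odd k then 1 else 0) + 2 * if k % 4 = 2 then 1 else 0 := by
    simp only [Nat.odd_iff]
    split_ifs <;> omega
  calc oddParts (splitHalves p)
      = ∑' j, if Odd (splitHalves p j) then 1 else 0 :=
        (hp.split hdist).ncard_setOf_eq_tsum Nat.not_odd_zero
    _ = ∑' i, ((if Odd (p i) then 1 else 0) + 2 * if p i % 4 = 2 then 1 else 0) := by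
        rw [tsum_eq_tsum_even_add_odd ((hp.split hdist).hasFiniteSupport_comp
          (w := fun k => if Odd k then 1 else 0) (by simp))]
        simp only [splitHalves_even, splitHalves_odd, halves_parity]
    _ = (∑' i, if Odd (p i) then 1 else 0) + 2 * ∑' i, if p i % 4 = 2 then 1 else 0 := by
        rw [Summable.tsum_add (hp.summable_comp (w := fun k => if Odd k then 1 else 0) (by simp))
          (hp.summable_comp (w := fun k => 2 * if k % 4 = 2 then 1 else 0) rfl),
          (hp.summable_comp (w := fun k => if k % 4 = 2 then 1 else 0) rfl).tsum_mul_left]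
    _ = oddParts p + 2 * {i | p i % 4 = 2}.ncard := by
        rw [oddParts, hp.ncard_setOf_eq_tsum Nat.not_odd_zero,
          hp.ncard_setOf_eq_tsum (P := (· % 4 = 2)) (by decide)]

theorem oddParts_conjFun_splitHalves (hp : IsPartitionFun p) (hdist : HasDistinctOddParts p) :
    oddParts (conjFun (splitHalves p)) = oddParts p := by
  rw [(hp.split hdist).oddParts_conjFun, oddParts, hp.ncard_setOf_eq_tsum Nat.not_odd_zero]
  refine tsum_congr fun i => ?_
  rw [splitHalves_even, splitHalves_odd]
  split_ifs with h <;> rw [Nat.odd_iff] at h <;> omega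

theorem exists_splitHalves_eq (hg : IsPartitionFun g)
    (hle : ∀ i, g (2 * i) ≤ g (2 * i + 1) + 1) :
    ∃ p, IsPartitionFun p ∧ HasDistinctOddParts p ∧ splitHalves p = g := by
  have step (i : ℕ) : g (2 * i + 1) ≤ g (2 * i) := hg.antitone (2 * i).le_succ
  have step' (i : ℕ) : g (2 * (i + 1)) ≤ g (2 * i + 1) := hg.antitone (by omega)
  have hp : IsPartitionFun fun i => g (2 * i) + g (2 * i + 1) := by
    obtain ⟨N, hN⟩ := hg.2
    refine of_succ_le (fun i => ?_) ⟨N, fun i hi => ?_⟩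
    · linarith [step i, step' i, step (i + 1)]
    · rw [hN _ (by omega), hN _ (by omega)]
  refine ⟨_, hp, hp.hasDistinctOddParts_iff.2 fun i hi => ?_, funext fun j => ?_⟩
  · have := step i
    have := step' i
    have := step (i + 1)
    rw [Nat.odd_iff] at hi
    omega
  · obtain ⟨i, rfl | rfl⟩ := j.even_or_odd'
    · rw [splitHalves_even]
      have := step i
      have := hle i
      omega
    · rw [splitHalves_odd]
      have := step i
      have := hle i
      omega

end IsPartitionFun

theorem splitHalves_injective : Function.Injective splitHalves := fun p p' h => by
  funext i
  have heven := congrFun h (2 * i)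
  have hodd := congrFun h (2 * i + 1)
  rw [splitHalves_even, splitHalves_even] at heven
  rw [splitHalves_odd, splitHalves_odd] at hodd
  omega

theorem oddParts_add_two_nsmul (f g : ℕ → ℕ) : oddParts (f + 2 • g) = oddParts f := by
  simp [oddParts, Nat.odd_add]

theorem numParts_eq_oddParts {q : ℕ → ℕ} (hodd : ∀ i, 0 < q i → Odd (q i)) :
    numParts q = oddParts q :=
  congrArg Set.ncard (Set.ext fun i => ⟨hodd i, Odd.pos⟩)

/-- Pairs `(p, q)` of partitions, where the odd parts of `p` are distinct and all parts of `q` are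
odd. They mediate between the partitions and the triples of Stanley's identity. -/
def oddPairs : Set ((ℕ → ℕ) × (ℕ → ℕ)) :=
  {x | IsPartitionFun x.1 ∧ HasDistinctOddParts x.1 ∧
    IsPartitionFun x.2 ∧ ∀ i, 0 < x.2 i → Odd (x.2 i)}

/-- The partition assembled from a pair `(p, q)` by splitting the parts of `p` into halves and
adding two copies of the conjugate of `q`. -/
noncomputable def assemble (x : (ℕ → ℕ) × (ℕ → ℕ)) : ℕ → ℕ := splitHalves x.1 + 2 • conjFun x.2

/-- Half of the drop `f j - f (j + 1)`, rounded down, at even positions `j`, and `0` at odd ones.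
For `f = assemble (p, q)` it is the multiplicity of `j + 1` in `q`: a part `j + 1` of `q`
contributes `2` to the drop at `j`, while the parts of `p` contribute at most `1` in total. -/
def halfDrop (f : ℕ → ℕ) (j : ℕ) : ℕ := if Even j then (f j - f (j + 1)) / 2 else 0

theorem halfDrop_even (f : ℕ → ℕ) (i : ℕ) :
    halfDrop f (2 * i) = (f (2 * i) - f (2 * i + 1)) / 2 :=
  if_pos (even_two_mul i)

theorem halfDrop_odd (f : ℕ → ℕ) (i : ℕ) : halfDrop f (2 * i + 1) = 0 :=
  if_neg (Nat.not_even_two_mul_add_one i)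

section Assemble

variable {p q : ℕ → ℕ}

theorem isPartitionFun_assemble (hx : (p, q) ∈ oddPairs) : IsPartitionFun (assemble (p, q)) := by
  obtain ⟨hp, hdist, hq, -⟩ := hx
  rw [assemble, two_nsmul]
  exact (hp.split hdist).add (hq.conj.add hq.conj)

theorem partSum_assemble (hx : (p, q) ∈ oddPairs) :
    partSum (assemble (p, q)) = partSum p + 2 * partSum q := by
  obtain ⟨hp, hdist, hq, -⟩ := hx
  rw [assemble, two_nsmul, (hp.split hdist).partSum_add (hq.conj.add hq.conj),
    hp.partSum_splitHalves hdist, hq.conj.partSum_add hq.conj, hq.partSum_conjFun, two_mul]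

theorem oddParts_assemble (hx : (p, q) ∈ oddPairs) :
    oddParts (assemble (p, q)) = oddParts p + 2 * {i | p i % 4 = 2}.ncard := by
  rw [assemble, oddParts_add_two_nsmul, hx.1.oddParts_splitHalves hx.2.1]

theorem oddParts_conjFun_assemble (hx : (p, q) ∈ oddPairs) :
    oddParts (conjFun (assemble (p, q))) = oddParts p + 2 * numParts q := by
  obtain ⟨hp, hdist, hq, hodd⟩ := hx
  rw [assemble, two_nsmul, (hp.split hdist).oddParts_conjFun_add (hq.conj.add hq.conj),
    hp.oddParts_conjFun_splitHalves hdist, hq.conj.oddParts_conjFun_add hq.conj,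
    hq.conjFun_conjFun, numParts_eq_oddParts hodd, two_mul]

theorem conjFun_eq_halfDrop_assemble_add_succ (hx : (p, q) ∈ oddPairs) (j : ℕ) :
    conjFun q j = halfDrop (assemble (p, q)) j + conjFun q (j + 1) := by
  obtain ⟨-, -, hq, hodd⟩ := hx
  obtain ⟨i, rfl | rfl⟩ := j.even_or_odd'
  · have hle : conjFun q (2 * i + 1) ≤ conjFun q (2 * i) := hq.conj.antitone (2 * i).le_succ
    simp only [halfDrop_even, assemble, Pi.add_apply, Pi.smul_apply, smul_eq_mul,
      splitHalves_even, splitHalves_odd]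
    omega
  · rw [halfDrop_odd, zero_add, conjFun_odd_eq_conjFun_succ hodd]

end Assemble

theorem injOn_assemble : Set.InjOn assemble oddPairs := by
  rintro ⟨p, q⟩ hx ⟨p', q'⟩ hx' h
  obtain ⟨-, -, hq : IsPartitionFun q, -⟩ := id hx
  obtain ⟨-, -, hq' : IsPartitionFun q', -⟩ := id hx'
  have hconj : conjFun q = conjFun q' :=
    hq.conj.eq_of_forall_eq_add_succ hq'.conj (conjFun_eq_halfDrop_assemble_add_succ hx)
      (h ▸ conjFun_eq_halfDrop_assemble_add_succ hx')
  obtain rfl : q = q' := by rw [← hq.conjFun_conjFun, hconj, hq'.conjFun_conjFun]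
  obtain rfl : p = p' := splitHalves_injective (add_right_cancel h)
  rfl

theorem IsPartitionFun.exists_eq_add_two_nsmul {f : ℕ → ℕ} (hf : IsPartitionFun f) :
    ∃ g h, IsPartitionFun g ∧ (∀ i, g (2 * i) ≤ g (2 * i + 1) + 1) ∧
      IsPartitionFun h ∧ (∀ i, h (2 * i + 1) = h (2 * i + 2)) ∧ f = g + 2 • h := by
  obtain ⟨N, hN⟩ := hf.2
  have halfDrop_le (j : ℕ) : 2 * halfDrop f j ≤ f j - f (j + 1) := by
    rw [halfDrop]
    split_ifs <;> omega
  have drop_zero (j : ℕ) (hj : N ≤ j) : f j - f (j + 1) = 0 := by rw [hN j hj, Nat.zero_sub]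
  obtain ⟨h, hh, hdrop⟩ := exists_forall_eq_add_succ (d := halfDrop f)
    ⟨N, fun j hj => by have := halfDrop_le j; have := drop_zero j hj; omega⟩
  obtain ⟨g, hg, gdrop⟩ := exists_forall_eq_add_succ
    (d := fun j => f j - f (j + 1) - 2 * halfDrop f j) ⟨N, fun j hj => by simp [drop_zero j hj]⟩
  refine ⟨g, h, hg, fun i => ?_, hh, fun i => ?_, ?_⟩
  · rw [gdrop, halfDrop_even]
    omega
  · rw [hdrop, halfDrop_odd, zero_add]
  · have hsum : IsPartitionFun (g + 2 • h) := two_nsmul h ▸ hg.add (hh.add hh)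
    refine hf.eq_of_forall_eq_add_succ hsum (d := fun j => f j - f (j + 1)) (fun j => ?_)
      fun j => ?_
    · exact (Nat.sub_add_cancel (hf.antitone j.le_succ)).symm
    · have := halfDrop_le j
      simp only [Pi.add_apply, Pi.smul_apply, smul_eq_mul]
      rw [gdrop j, hdrop j]
      omega

theorem surjOn_assemble : Set.SurjOn assemble oddPairs {f | IsPartitionFun f} := by
  intro f hf
  obtain ⟨g, h, hg, hle, hh, heq, rfl⟩ := IsPartitionFun.exists_eq_add_two_nsmul hf
  obtain ⟨p, hp, hdist, rfl⟩ := hg.exists_splitHalves_eq hle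
  exact ⟨(p, conjFun h), ⟨hp, hdist, hh.conj, hh.odd_conjFun_of_forall_eq heq⟩,
    by rw [assemble, hh.conjFun_conjFun]⟩

theorem bijOn_assemble : Set.BijOn assemble oddPairs {f | IsPartitionFun f} :=
  ⟨fun _ hx => isPartitionFun_assemble hx, injOn_assemble, surjOn_assemble⟩

/-! ### Multisets of parts -/

/-- The multiset of the (nonzero) parts of a partition. -/
noncomputable def parts (f : ℕ → ℕ) : Multiset ℕ := (Multiset.range (numParts f)).map f

/-- The partition with a given multiset of parts, ignoring zeros: the conjugate of the function
counting the elements greater than `k`. -/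
noncomputable def ofParts (m : Multiset ℕ) : ℕ → ℕ := conjFun fun k => m.countP (k < ·)

namespace IsPartitionFun

variable {f : ℕ → ℕ}

theorem mem_parts (hf : IsPartitionFun f) {k : ℕ} : k ∈ parts f ↔ ∃ i, 0 < f i ∧ f i = k := by
  simp only [parts, Multiset.mem_map, Multiset.mem_range, hf.lt_numParts_iff]

theorem zero_notMem_parts (hf : IsPartitionFun f) : 0 ∉ parts f := fun h => by
  obtain ⟨i, hpos, hzero⟩ := hf.mem_parts.1 h
  exact hpos.ne' hzero

theorem zero_notMem_filter_parts (hf : IsPartitionFun f) (P : ℕ → Prop)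
    [DecidablePred P] : 0 ∉ (parts f).filter P := fun h =>
  hf.zero_notMem_parts (Multiset.mem_of_mem_filter h)

theorem forall_mem_parts_iff (hf : IsPartitionFun f) {P : ℕ → Prop} :
    (∀ k ∈ parts f, P k) ↔ ∀ i, 0 < f i → P (f i) := by
  simp [hf.mem_parts]

theorem sum_parts (hf : IsPartitionFun f) : (parts f).sum = partSum f :=
  hf.partSum_eq_sum_range.symm

theorem countP_parts (hf : IsPartitionFun f) {P : ℕ → Prop} [DecidablePred P] (hP : ¬ P 0) :
    (parts f).countP P = {i | P (f i)}.ncard := by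
  rw [parts, Multiset.countP_map, hf.ncard_setOf_eq_card_filter hP]
  rfl

theorem card_filter_odd_parts (hf : IsPartitionFun f) :
    Multiset.card ((parts f).filter Odd) = oddParts f := by
  rw [← Multiset.countP_eq_card_filter, hf.countP_parts Nat.not_odd_zero, oddParts]

theorem count_parts (hf : IsPartitionFun f) {k : ℕ} (hk : 0 < k) :
    (parts f).count k = multiplicity' f k := by
  simpa only [Multiset.count, multiplicity', eq_comm] using hf.countP_parts (P := (k = ·)) hk.ne'

theorem ofParts_parts (hf : IsPartitionFun f) : ofParts (parts f) = f := by
  have hcount : (fun k => (parts f).countP (k < ·)) = conjFun f :=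
    funext fun k => hf.countP_parts (Nat.not_lt_zero k)
  rw [ofParts, hcount, hf.conjFun_conjFun]

theorem nodup_filter_odd_parts_iff (hf : IsPartitionFun f) :
    ((parts f).filter Odd).Nodup ↔ HasDistinctOddParts f := by
  have hmem (i : ℕ) : i < numParts f ∧ Odd (f i) ↔ Odd (f i) := by
    rw [hf.lt_numParts_iff]
    exact and_iff_right_of_imp Odd.pos
  rw [parts, Multiset.filter_map,
    Multiset.nodup_map_iff_inj_on ((Multiset.nodup_range _).filter _)]
  simp only [Multiset.mem_filter, Multiset.mem_range, Function.comp_apply, hmem]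
  rfl

end IsPartitionFun

theorem card_parts (f : ℕ → ℕ) : Multiset.card (parts f) = numParts f := by simp [parts]

theorem isPartitionFun_countP_lt (m : Multiset ℕ) : IsPartitionFun fun k => m.countP (k < ·) := by
  refine ⟨fun i j hij => ?_, m.sum + 1, fun i hi => ?_⟩
  · simp only [Multiset.countP_eq_card_filter]
    exact Multiset.card_le_card (Multiset.monotone_filter_right m fun k => hij.trans_lt)
  · refine Multiset.countP_eq_zero.2 fun k hk => ?_
    have := Multiset.le_sum_of_mem hk
    omega

theorem isPartitionFun_ofParts (m : Multiset ℕ) : IsPartitionFun (ofParts m) :=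
  (isPartitionFun_countP_lt m).conj

theorem countP_lt_eq_count_succ_add (m : Multiset ℕ) (k : ℕ) :
    m.countP (k < ·) = m.count (k + 1) + m.countP (k + 1 < ·) := by
  induction m using Multiset.induction with
  | empty => simp
  | cons a m ih =>
    simp only [Multiset.countP_cons, Multiset.count_cons, ih]
    split_ifs <;> omega

theorem eq_of_forall_countP_lt_eq {m m' : Multiset ℕ} (hm : 0 ∉ m) (hm' : 0 ∉ m')
    (h : ∀ k, m.countP (k < ·) = m'.countP (k < ·)) : m = m' := by
  ext k
  cases k with
  | zero => rw [Multiset.count_eq_zero.2 hm, Multiset.count_eq_zero.2 hm']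
  | succ k =>
    have := countP_lt_eq_count_succ_add m k
    have := countP_lt_eq_count_succ_add m' k
    have := h k
    have := h (k + 1)
    omega

theorem parts_ofParts {m : Multiset ℕ} (hm : 0 ∉ m) : parts (ofParts m) = m := by
  have hf := isPartitionFun_ofParts m
  refine eq_of_forall_countP_lt_eq hf.zero_notMem_parts hm fun k => ?_
  calc (parts (ofParts m)).countP (k < ·)
      = conjFun (ofParts m) k := hf.countP_parts (Nat.not_lt_zero k)
    _ = m.countP (k < ·) := congrFun (isPartitionFun_countP_lt m).conjFun_conjFun k

theorem partSum_ofParts {m : Multiset ℕ} (hm : 0 ∉ m) : partSum (ofParts m) = m.sum := by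
  rw [← (isPartitionFun_ofParts m).sum_parts, parts_ofParts hm]

theorem numParts_ofParts {m : Multiset ℕ} (hm : 0 ∉ m) :
    numParts (ofParts m) = Multiset.card m := by
  rw [← card_parts, parts_ofParts hm]

theorem forall_ofParts {m : Multiset ℕ} (hm : 0 ∉ m) {P : ℕ → Prop} (h : ∀ k ∈ m, P k) (i : ℕ)
    (hi : 0 < ofParts m i) : P (ofParts m i) :=
  (isPartitionFun_ofParts m).forall_mem_parts_iff.1 (by rwa [parts_ofParts hm]) i hi

section AddTwoNsmul

variable {α : Type*} {a a' b b' : Multiset α}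

theorem odd_count_add_two_nsmul_iff [DecidableEq α] (ha : a.Nodup) {k : α} :
    Odd ((a + 2 • b).count k) ↔ k ∈ a := by
  have := Multiset.nodup_iff_count_le_one.1 ha k
  rw [← Multiset.one_le_count_iff_mem, Multiset.count_add, Multiset.count_nsmul, Nat.odd_iff]
  omega

theorem ncard_odd_count_add_two_nsmul [DecidableEq α] (ha : a.Nodup) :
    {k | Odd ((a + 2 • b).count k)}.ncard = Multiset.card a := by
  simp only [odd_count_add_two_nsmul_iff ha]
  exact Set.ncard_coe_finset ⟨a, ha⟩

theorem eq_and_eq_of_add_two_nsmul_eq (ha : a.Nodup) (ha' : a'.Nodup)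
    (h : a + 2 • b = a' + 2 • b') : a = a' ∧ b = b' := by
  classical
  obtain rfl : a = a' := (Multiset.Nodup.ext ha ha').2 fun k => by
    rw [← odd_count_add_two_nsmul_iff ha, h, odd_count_add_two_nsmul_iff ha']
  refine ⟨rfl, Multiset.ext.2 fun k => ?_⟩
  have hcount := congrArg (Multiset.count k) (add_left_cancel h)
  simpa only [Multiset.count_nsmul, mul_right_inj' two_ne_zero] using hcount

theorem exists_nodup_add_two_nsmul_eq (t : Multiset α) :
    ∃ a b : Multiset α, a.Nodup ∧ a + 2 • b = t := by
  classical
  induction t using Multiset.induction with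
  | empty => exact ⟨0, 0, Multiset.nodup_zero, by simp⟩
  | cons k t ih =>
    obtain ⟨a, b, ha, rfl⟩ := ih
    by_cases hk : k ∈ a
    · obtain ⟨c, rfl⟩ := Multiset.exists_cons_of_mem hk
      refine ⟨c, k ::ₘ b, (Multiset.nodup_cons.1 ha).2, ?_⟩
      simp only [two_nsmul, ← Multiset.singleton_add]
      abel
    · exact ⟨k ::ₘ a, b, Multiset.nodup_cons.2 ⟨hk, ha⟩, Multiset.cons_add k a _⟩

end AddTwoNsmul

theorem filter_four_dvd_add_filter_mod_four_add_filter_odd (m : Multiset ℕ) :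
    m.filter (4 ∣ ·) + m.filter (· % 4 = 2) + m.filter Odd = m := by
  ext k
  simp only [Multiset.count_add, Multiset.count_filter, Nat.odd_iff]
  split_ifs <;> omega

/-! ### Triples as pairs -/

/-- Triples of partitions whose parts are, respectively, divisible by `4`, congruent to `2` modulo
`4`, and odd. -/
def residueTriples : Set ((ℕ → ℕ) × (ℕ → ℕ) × (ℕ → ℕ)) :=
  {t | IsPartitionFun t.1 ∧ IsPartitionFun t.2.1 ∧ IsPartitionFun t.2.2 ∧
    (∀ i, 0 < t.1 i → 4 ∣ t.1 i) ∧ (∀ i, 0 < t.2.1 i → t.2.1 i % 4 = 2) ∧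
    ∀ i, 0 < t.2.2 i → Odd (t.2.2 i)}

/-- The triple of partitions obtained from a pair `(p, q)` by sorting the parts of `p` by residue
class modulo `4` and adding every part of `q` twice to the odd ones. -/
noncomputable def distribute (x : (ℕ → ℕ) × (ℕ → ℕ)) : (ℕ → ℕ) × (ℕ → ℕ) × (ℕ → ℕ) :=
  (ofParts ((parts x.1).filter (4 ∣ ·)), ofParts ((parts x.1).filter (· % 4 = 2)),
    ofParts ((parts x.1).filter Odd + 2 • parts x.2))

section Distribute

variable {p q : ℕ → ℕ}

theorem odd_of_mem_filter_odd_add_two_nsmul (hx : (p, q) ∈ oddPairs) :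
    ∀ k ∈ (parts p).filter Odd + 2 • parts q, Odd k := by
  intro k hk
  rcases Multiset.mem_add.1 hk with hk | hk
  · exact Multiset.of_mem_filter hk
  · exact hx.2.2.1.forall_mem_parts_iff.2 hx.2.2.2 k (Multiset.mem_of_mem_nsmul hk)

theorem zero_notMem_filter_odd_add_two_nsmul (hx : (p, q) ∈ oddPairs) :
    0 ∉ (parts p).filter Odd + 2 • parts q := fun h =>
  Nat.not_odd_zero (odd_of_mem_filter_odd_add_two_nsmul hx 0 h)

theorem distribute_mem_residueTriples (hx : (p, q) ∈ oddPairs) :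
    distribute (p, q) ∈ residueTriples :=
  ⟨isPartitionFun_ofParts _, isPartitionFun_ofParts _, isPartitionFun_ofParts _,
    forall_ofParts (hx.1.zero_notMem_filter_parts _) fun _ => Multiset.of_mem_filter,
    forall_ofParts (hx.1.zero_notMem_filter_parts _) fun _ => Multiset.of_mem_filter,
    forall_ofParts (zero_notMem_filter_odd_add_two_nsmul hx)
      (odd_of_mem_filter_odd_add_two_nsmul hx)⟩

theorem partSum_distribute (hx : (p, q) ∈ oddPairs) :
    partSum (distribute (p, q)).1 + partSum (distribute (p, q)).2.1 +
      partSum (distribute (p, q)).2.2 = partSum p + 2 * partSum q := by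
  obtain ⟨hp, -, hq, -⟩ := id hx
  rw [distribute, partSum_ofParts (hp.zero_notMem_filter_parts _),
    partSum_ofParts (hp.zero_notMem_filter_parts _),
    partSum_ofParts (zero_notMem_filter_odd_add_two_nsmul hx), Multiset.sum_add,
    Multiset.sum_nsmul, ← add_assoc, ← Multiset.sum_add, ← Multiset.sum_add,
    filter_four_dvd_add_filter_mod_four_add_filter_odd, hp.sum_parts, hq.sum_parts, smul_eq_mul]

theorem numParts_distribute_odd (hx : (p, q) ∈ oddPairs) :
    numParts (distribute (p, q)).2.2 = oddParts p + 2 * numParts q := by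
  rw [distribute, numParts_ofParts (zero_notMem_filter_odd_add_two_nsmul hx), Multiset.card_add,
    Multiset.card_nsmul, hx.1.card_filter_odd_parts, card_parts]

theorem numParts_distribute_two_mod_four (hx : (p, q) ∈ oddPairs) :
    numParts (distribute (p, q)).2.1 = {i | p i % 4 = 2}.ncard := by
  rw [distribute, numParts_ofParts (hx.1.zero_notMem_filter_parts _),
    ← Multiset.countP_eq_card_filter, hx.1.countP_parts (by decide)]

theorem ncard_odd_multiplicity_distribute (hx : (p, q) ∈ oddPairs) :
    {k | 0 < k ∧ Odd (multiplicity' (distribute (p, q)).2.2 k)}.ncard = oddParts p := by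
  obtain ⟨hp, hdist, -, -⟩ := id hx
  have hzero := zero_notMem_filter_odd_add_two_nsmul hx
  rw [← hp.card_filter_odd_parts,
    ← ncard_odd_count_add_two_nsmul (b := parts q) (hp.nodup_filter_odd_parts_iff.2 hdist)]
  congr 1
  ext k
  rcases k.eq_zero_or_pos with rfl | hk
  · simp
  · simp only [Set.mem_ofPred_eq, hk, true_and, distribute,
      ← (isPartitionFun_ofParts _).count_parts hk, parts_ofParts hzero]

end Distribute

theorem injOn_distribute : Set.InjOn distribute oddPairs := by
  rintro ⟨p, q⟩ hx ⟨p', q'⟩ hx' h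
  obtain ⟨hp : IsPartitionFun p, hdist : HasDistinctOddParts p, hq : IsPartitionFun q, -⟩ := id hx
  obtain ⟨hp' : IsPartitionFun p', hdist' : HasDistinctOddParts p', hq' : IsPartitionFun q', -⟩ :=
    id hx'
  have parts_eq {m m' : Multiset ℕ} (hm : 0 ∉ m) (hm' : 0 ∉ m') (h : ofParts m = ofParts m') :
      m = m' := by rw [← parts_ofParts hm, h, parts_ofParts hm']
  have hfour := parts_eq (hp.zero_notMem_filter_parts _) (hp'.zero_notMem_filter_parts _)
    (congrArg Prod.fst h)
  have htwo := parts_eq (hp.zero_notMem_filter_parts _) (hp'.zero_notMem_filter_parts _)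
    (congrArg (fun t => t.2.1) h)
  obtain ⟨hodd, hq_parts⟩ := eq_and_eq_of_add_two_nsmul_eq
    (hp.nodup_filter_odd_parts_iff.2 hdist) (hp'.nodup_filter_odd_parts_iff.2 hdist')
    (parts_eq (zero_notMem_filter_odd_add_two_nsmul hx) (zero_notMem_filter_odd_add_two_nsmul hx')
      (congrArg (fun t => t.2.2) h))
  have hp_parts : parts p = parts p' := by
    rw [← filter_four_dvd_add_filter_mod_four_add_filter_odd (parts p), hfour, htwo, hodd,
      filter_four_dvd_add_filter_mod_four_add_filter_odd]
  rw [← hp.ofParts_parts, hp_parts, hp'.ofParts_parts, ← hq.ofParts_parts, hq_parts,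
    hq'.ofParts_parts]

theorem filter_mod_four_add_eq {u v w : Multiset ℕ} (hu : ∀ k ∈ u, 4 ∣ k)
    (hv : ∀ k ∈ v, k % 4 = 2) (hw : ∀ k ∈ w, Odd k) :
    (u + v + w).filter (4 ∣ ·) = u ∧ (u + v + w).filter (· % 4 = 2) = v ∧
      (u + v + w).filter Odd = w := by
  simp only [Nat.odd_iff] at hw ⊢
  have filter_eq_zero {m : Multiset ℕ} {P : ℕ → Prop} [DecidablePred P]
      (h : ∀ k ∈ m, ¬ P k) : m.filter P = 0 := Multiset.filter_eq_nil.2 h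
  refine ⟨?_, ?_, ?_⟩
  · rw [Multiset.filter_add, Multiset.filter_add, Multiset.filter_eq_self.2 hu,
      filter_eq_zero fun k hk => by have := hv k hk; omega,
      filter_eq_zero fun k hk => by have := hw k hk; omega, add_zero, add_zero]
  · rw [Multiset.filter_add, Multiset.filter_add, Multiset.filter_eq_self.2 hv,
      filter_eq_zero fun k hk => by have := hu k hk; omega,
      filter_eq_zero fun k hk => by have := hw k hk; omega, add_zero, zero_add]
  · rw [Multiset.filter_add, Multiset.filter_add, Multiset.filter_eq_self.2 hw,
      filter_eq_zero fun k hk => by have := hu k hk; omega,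
      filter_eq_zero fun k hk => by have := hv k hk; omega, add_zero, zero_add]

theorem surjOn_distribute : Set.SurjOn distribute oddPairs residueTriples := by
  rintro ⟨ν, σ, τ⟩ ⟨hν : IsPartitionFun ν, hσ : IsPartitionFun σ, hτ : IsPartitionFun τ,
    hνfour, hσtwo, hτodd⟩
  obtain ⟨a, b, ha, hab⟩ := exists_nodup_add_two_nsmul_eq (parts τ)
  have hodd : ∀ k ∈ a + 2 • b, Odd k := hab ▸ hτ.forall_mem_parts_iff.2 hτodd
  have haodd : ∀ k ∈ a, Odd k := fun k hk => hodd k (Multiset.mem_add.2 (.inl hk))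
  have hbodd : ∀ k ∈ b, Odd k := fun k hk =>
    hodd k (Multiset.mem_add.2 (.inr (Multiset.mem_nsmul_of_ne_zero two_ne_zero |>.2 hk)))
  obtain ⟨hfour, htwo, hfilter⟩ := filter_mod_four_add_eq
    (hν.forall_mem_parts_iff.2 hνfour) (hσ.forall_mem_parts_iff.2 hσtwo) haodd
  have hb_zero : 0 ∉ b := fun h => Nat.not_odd_zero (hbodd 0 h)
  have hP_zero : 0 ∉ parts ν + parts σ + a := by
    have ha_zero : 0 ∉ a := fun h => Nat.not_odd_zero (haodd 0 h)
    simp [hν.zero_notMem_parts, hσ.zero_notMem_parts, ha_zero]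
  have hp := isPartitionFun_ofParts (parts ν + parts σ + a)
  refine ⟨(ofParts (parts ν + parts σ + a), ofParts b), ⟨hp, ?_, isPartitionFun_ofParts b,
    forall_ofParts hb_zero hbodd⟩, ?_⟩
  · rwa [← hp.nodup_filter_odd_parts_iff, parts_ofParts hP_zero, hfilter]
  · rw [distribute, parts_ofParts hP_zero, parts_ofParts hb_zero, hfour, htwo, hfilter, hab,
      hν.ofParts_parts, hσ.ofParts_parts, hτ.ofParts_parts]

theorem bijOn_distribute : Set.BijOn distribute oddPairs residueTriples :=
  ⟨fun _ hx => distribute_mem_residueTriples hx, injOn_distribute, surjOn_distribute⟩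

theorem ncard_setOf_mem_and_eq_of_bijOn {α β : Type*} {g : α → β} {A : Set α} {B : Set β}
    (hg : Set.BijOn g A B) {P : α → Prop} {R : β → Prop} (hPR : ∀ a ∈ A, (P a ↔ R (g a))) :
    {a | a ∈ A ∧ P a}.ncard = {b | b ∈ B ∧ R b}.ncard := by
  refine Set.ncard_congr (fun a _ => g a) (fun a ha => ⟨hg.mapsTo ha.1, (hPR a ha.1).1 ha.2⟩)
    (fun a a' ha ha' h => hg.injOn ha.1 ha'.1 h) ?_
  rintro b ⟨hb, hRb⟩
  obtain ⟨a, ha, rfl⟩ := hg.surjOn hb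
  exact ⟨a, ⟨ha, (hPR a ha).2 hRb⟩, rfl⟩

/-- For all `n, r, s`, the number of partitions `π` of `n` with exactly `r` odd parts
whose conjugate has exactly `s` odd parts equals the number of triples `(ν, σ, τ)`
where `ν` is a partition into parts divisible by 4, `σ` is a partition into parts
`≡ 2 (mod 4)`, `τ` is a partition into odd parts, the sizes of `ν, σ, τ` sum to `n`,
`τ` has exactly `s` parts, and twice the number of parts of `σ` plus the number of
distinct integers occurring in `τ` with odd multiplicity equals `r`. -/
theorem stanley_partition_triple_identity (n r s : ℕ) :
    {f : ℕ → ℕ | IsPartitionFun f ∧ partSum f = n ∧ oddParts f = r ∧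
        oddParts (conjFun f) = s}.ncard =
    {t : (ℕ → ℕ) × (ℕ → ℕ) × (ℕ → ℕ) |
        IsPartitionFun t.1 ∧ IsPartitionFun t.2.1 ∧ IsPartitionFun t.2.2 ∧
        (∀ i, 0 < t.1 i → 4 ∣ t.1 i) ∧
        (∀ i, 0 < t.2.1 i → t.2.1 i % 4 = 2) ∧
        (∀ i, 0 < t.2.2 i → Odd (t.2.2 i)) ∧
        partSum t.1 + partSum t.2.1 + partSum t.2.2 = n ∧
        numParts t.2.2 = s ∧
        2 * numParts t.2.1
          + {k : ℕ | 0 < k ∧ Odd (multiplicity' t.2.2 k)}.ncard = r}.ncard := by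
  trans {x | x ∈ oddPairs ∧ partSum x.1 + 2 * partSum x.2 = n ∧
    oddParts x.1 + 2 * {i | x.1 i % 4 = 2}.ncard = r ∧ oddParts x.1 + 2 * numParts x.2 = s}.ncard
  · refine (ncard_setOf_mem_and_eq_of_bijOn bijOn_assemble fun x hx => ?_).symm
    rw [partSum_assemble hx, oddParts_assemble hx, oddParts_conjFun_assemble hx]
  · refine (ncard_setOf_mem_and_eq_of_bijOn bijOn_distribute (R := fun t =>
      partSum t.1 + partSum t.2.1 + partSum t.2.2 = n ∧ numParts t.2.2 = s ∧
        2 * numParts t.2.1 + {k | 0 < k ∧ Odd (multiplicity' t.2.2 k)}.ncard = r)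
      fun x hx => ?_).trans ?_
    · rw [partSum_distribute hx, numParts_distribute_odd hx, numParts_distribute_two_mod_four hx,
        ncard_odd_multiplicity_distribute hx, and_comm (a := _ = s), add_comm (2 * _) (oddParts _)]
    · simp only [residueTriples, Set.mem_ofPred_eq, and_assoc]
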